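/- arXiv:math-ph/0606035 — 2 statements merged into one kernel-verified Lean document; each statement's English description precedes it below -/
import Mathlib

section
/- Let n ≥ 1. For every Schwartz function f on ℝⁿ: (i) Σ_{k∈ℤⁿ} 𝓕f(√(2π)·k) = Σ_{k∈ℤⁿ} f(√(2π)·k); (ii) for every symmetric integer n×n matrix B with even diagonal, Σ_{k∈ℤⁿ} e^{πi⟨kB,k⟩} f(√(2π)·k) = Σ_{k∈ℤⁿ} f(√(2π)·k); (iii) for every A ∈ GL(n,ℤ), Σ_{k∈ℤⁿ} f(√(2π)·kA) = Σ_{k∈ℤⁿ} f(√(2π)·k). That is, the Dirac comb Δ = Σ_{k∈ℤⁿ} δ_{√(2π)k} is fixed by the Weil-representation operators attached to the generators of Γ_{1,2}. -/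
noncomputable section

open scoped BigOperators Real

/-- The inclusion `ℤⁿ ⊆ ℝⁿ`. -/
def ZtoR {n : ℕ} (k : Fin n → ℤ) : Fin n → ℝ := fun j => (k j : ℝ)

/-- The Fourier transform `𝓕f(y) = (2π)^{−n/2} ∫_{ℝⁿ} f(x) e^{i⟨x,y⟩} dx`. -/
def Fhat (n : ℕ) (f : SchwartzMap (Fin n → ℝ) ℂ) (y : Fin n → ℝ) : ℂ :=
  (((2 * π) ^ (-(n : ℝ) / 2) : ℝ) : ℂ) *
    ∫ x : Fin n → ℝ, f x * Complex.exp (Complex.I * ((∑ j, x j * y j : ℝ) : ℂ))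

/-!
Write `g x = f (√(2π) x)`. The chirp `e^{πi⟨kB,k⟩}` equals `1` at every `k ∈ ℤⁿ` because the
off-diagonal terms of `⟨kB,k⟩` pair up and the diagonal ones are even, and `k ↦ kA` permutes `ℤⁿ`.
The invariance under `𝓕` is Poisson summation for `g`: the periodization `x ↦ ∑ₖ g (x + k)` descends
to a continuous function on the torus `(ℝ/ℤ)ⁿ`, whose Fourier coefficients are the values of the
Fourier transform of `g` at integer vectors, and which is the sum of its Fourier series because
these values are summable.
-/

open MeasureTheory Set TopologicalSpace UnitAddTorus
open scoped FourierTransform SchwartzMap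

section Translates

variable {E F κ : Type*} [NormedAddCommGroup F]

lemma integrable_of_summable_norm_restrict_comp_addRight [AddGroup E] [TopologicalSpace E]
    [IsTopologicalAddGroup E] [T2Space E] [MeasurableSpace E] [BorelSpace E] [Countable κ]
    {μ : Measure E} [IsLocallyFiniteMeasure μ] [μ.IsAddRightInvariant] {f : C(E, F)} {v : κ → E}
    (K : Compacts E) (hK : ∀ x, ∃ k, ∃ y ∈ K, y + v k = x)
    (hf : Summable fun k => ‖(f.comp (ContinuousMap.addRight (v k))).restrict K‖) :
    Integrable f μ := by
  let T (k : κ) : Compacts E := K.map (ContinuousMap.addRight (v k)) (map_continuous _)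
  have hT : ⋃ k, (T k : Set E) = univ := eq_univ_of_forall fun x => mem_iUnion.mpr (hK x)
  have measure_T (k : κ) : μ.real (T k) = μ.real K := by
    simp [T, measureReal_def, image_add_right, measure_preimage_add_right]
  refine integrable_of_summable_norm_restrict (s := T) ?_ hT
  simp only [measure_T]
  refine Summable.mul_right _ (.of_nonneg_of_le (fun _ => norm_nonneg _) (fun k => ?_) hf)
  refine (ContinuousMap.norm_le _ (norm_nonneg _)).mpr ?_
  rintro ⟨_, x, hx, rfl⟩
  exact ((f.comp (ContinuousMap.addRight (v k))).restrict (K : Set E)).norm_coe_le_norm ⟨x, hx⟩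

lemma summable_norm_restrict_comp_addRight_of_isBigO [NormedAddCommGroup E] [NormedSpace ℝ E]
    [FiniteDimensional ℝ E] (L : Submodule ℤ E) [DiscreteTopology L] {f : C(E, F)} {s : ℝ}
    (hs : s < -Module.finrank ℤ L) (hf : f =O[Filter.cocompact E] (‖·‖ ^ s)) (K : Compacts E) :
    Summable fun l : L => ‖(f.comp (ContinuousMap.addRight (l : E))).restrict K‖ := by
  obtain ⟨C, hC, hbound⟩ := hf.exists_pos
  obtain ⟨R, -, hR⟩ := Filter.hasBasis_cobounded_norm.eventually_iff.mp
    (Metric.cobounded_eq_cocompact (α := E) ▸ hbound.bound)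
  obtain ⟨r, hr, hKr⟩ := K.isCompact.isBounded.subset_closedBall_lt 0 0
  have hs0 : s ≤ 0 := hs.le.trans (by simp)
  have hlarge : ∀ᶠ l : L in Filter.cofinite, max (2 * r) (R + r) < ‖(l : E)‖ :=
    (tendsto_norm_cocompact_atTop.comp
      (AddSubgroup.tendsto_coe_cofinite_of_discrete L.toAddSubgroup
        DiscreteTopology.isDiscrete)).eventually_gt_atTop _
  refine .of_norm_bounded_eventually
    ((ZLattice.summable_norm_rpow L s hs).mul_left (C * (1 / 2) ^ s)) ?_
  filter_upwards [hlarge] with l hl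
  rw [norm_norm]
  refine (ContinuousMap.norm_le _ (by positivity)).mpr fun ⟨x, hx⟩ => ?_
  obtain ⟨hl2, hlR⟩ := max_lt_iff.mp hl
  have hxr : ‖x‖ ≤ r := mem_closedBall_zero_iff.mp (hKr hx)
  have hxl : ‖(l : E)‖ - ‖x‖ ≤ ‖x + l‖ := by
    simpa [add_comm] using norm_sub_norm_le (l : E) (-x)
  calc ‖f (x + l)‖ ≤ C * ‖‖x + l‖ ^ s‖ := hR (show R ≤ ‖x + l‖ by linarith)
    _ = C * ‖x + l‖ ^ s := by rw [Real.norm_of_nonneg (by positivity)]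
    _ ≤ C * (1 / 2 * ‖(l : E)‖) ^ s := by
      gcongr C * ?_
      exact Real.rpow_le_rpow_of_nonpos (by linarith) (by linarith) hs0
    _ = C * (1 / 2) ^ s * ‖l‖ ^ s := by
      rw [Real.mul_rpow (by norm_num) (norm_nonneg _), mul_assoc, Submodule.coe_norm]

end Translates

section PoissonSummation

variable {ι : Type*}

/-- The inclusion `ℤ^ι → ℝ^ι` into Euclidean space. -/
def intVec : (ι → ℤ) →+ EuclideanSpace ℝ ι where
  toFun k := WithLp.toLp 2 fun i => (k i : ℝ)
  map_zero' := by ext; simp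
  map_add' k l := by ext; simp

@[simp]
lemma intVec_apply (k : ι → ℤ) (i : ι) : intVec k i = k i := rfl

lemma intVec_injective : Function.Injective (intVec (ι := ι)) := fun k l h =>
  funext fun i => by simpa using congrArg (fun v => v i) h

/-- The projection of `ℝ^ι` onto the torus `(ℝ/ℤ)^ι`. -/
def torusMk : C(EuclideanSpace ℝ ι, UnitAddTorus ι) where
  toFun x i := (x i : UnitAddCircle)
  continuous_toFun := by fun_prop

lemma isQuotientMap_torusMk : Topology.IsQuotientMap (torusMk (ι := ι)) :=
  (IsOpenQuotientMap.piMap (f := fun (_ : ι) (x : ℝ) => (x : UnitAddCircle))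
    fun _ => QuotientAddGroup.isOpenQuotientMap_mk).isQuotientMap.comp
    (PiLp.homeomorph 2 fun _ : ι => ℝ).isQuotientMap

lemma torusMk_eq_iff {x y : EuclideanSpace ℝ ι} :
    torusMk x = torusMk y ↔ ∃ k, x + intVec k = y := by
  have h_coord (i : ι) : (x i : UnitAddCircle) = y i ↔ ∃ m : ℤ, x i + m = y i := by
    rw [QuotientAddGroup.eq, AddSubgroup.mem_zmultiples_iff]
    exact exists_congr fun m => by simp [eq_neg_add_iff_add_eq]
  calc torusMk x = torusMk y ↔ ∀ i, ∃ m : ℤ, x i + m = y i :=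
        funext_iff.trans (forall_congr' h_coord)
    _ ↔ ∃ k, x + intVec k = y := by simp [Classical.skolem, WithLp.ext_iff, funext_iff]

@[simp]
lemma torusMk_add_intVec (x : EuclideanSpace ℝ ι) (k : ι → ℤ) :
    torusMk (x + intVec k) = torusMk x :=
  (torusMk_eq_iff.mpr ⟨k, rfl⟩).symm

/-- The half-open unit cube `(0, 1]^ι`, a fundamental domain for the translations by `ℤ^ι`. -/
def unitCube (ι : Type*) : Set (EuclideanSpace ℝ ι) := {x | ∀ i, x i ∈ Ioc (0 : ℝ) 1}

lemma sub_intVec_mem_unitCube_iff {x : EuclideanSpace ℝ ι} {k : ι → ℤ} :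
    x - intVec k ∈ unitCube ι ↔ ∀ i, ⌈x i⌉ - 1 = k i := by
  refine forall_congr' fun i => ?_
  rw [sub_eq_iff_eq_add, Int.ceil_eq_iff]
  simp [add_comm]

lemma exists_isCompact_unitCube_subset : ∃ K, IsCompact K ∧ unitCube ι ⊆ K :=
  ⟨_, (PiLp.homeomorph 2 fun _ : ι => ℝ).isCompact_preimage.mpr (isCompact_Icc (a := 0) (b := 1)),
    fun _ hx => ⟨fun i => (hx i).1.le, fun i => (hx i).2⟩⟩

lemma measurableSet_unitCube [Countable ι] : MeasurableSet (unitCube ι) := by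
  have measurable_coord (i : ι) : Measurable fun x : EuclideanSpace ℝ ι => x i := by fun_prop
  rw [unitCube, ofPred_forall]
  exact .iInter fun i => measurableSet_Ioc.preimage (measurable_coord i)

variable [Fintype ι] {F : Type*} [NormedAddCommGroup F]

/-- The sum of the translates of `f` by `ℤ^ι` converges locally normally: on every compact set the
sup norms of the translates are summable. -/
def SummableTranslates (f : C(EuclideanSpace ℝ ι, F)) : Prop :=
  ∀ K : Compacts (EuclideanSpace ℝ ι),
    Summable fun k => ‖(f.comp (ContinuousMap.addRight (intVec k))).restrict K‖

lemma SummableTranslates.summable [CompleteSpace F] {f : C(EuclideanSpace ℝ ι, F)}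
    (hf : SummableTranslates f) (x : EuclideanSpace ℝ ι) : Summable fun k => f (x + intVec k) :=
  ContinuousMap.summable_apply (ContinuousMap.summable_of_locally_summable_norm hf) x

lemma SummableTranslates.integrable {f : C(EuclideanSpace ℝ ι, F)} (hf : SummableTranslates f) :
    Integrable f := by
  obtain ⟨K, hK, hcube⟩ := exists_isCompact_unitCube_subset (ι := ι)
  refine integrable_of_summable_norm_restrict_comp_addRight ⟨K, hK⟩ (fun x => ?_) (hf ⟨K, hK⟩)
  exact ⟨fun i => ⌈x i⌉ - 1, x - intVec _,
    hcube (sub_intVec_mem_unitCube_iff.mpr fun _ => rfl), sub_add_cancel _ _⟩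

lemma hasSum_setIntegral_unitCube_comp_add_intVec [NormedSpace ℝ F]
    {f : EuclideanSpace ℝ ι → F} (hf : Integrable f) :
    HasSum (fun k => ∫ x in unitCube ι, f (x + intVec k)) (∫ x, f x) := by
  let Q (k : ι → ℤ) : Set (EuclideanSpace ℝ ι) := {x | x - intVec k ∈ unitCube ι}
  have mem_Q {k x} : x ∈ Q k ↔ ∀ i, ⌈x i⌉ - 1 = k i := sub_intVec_mem_unitCube_iff
  have measurableSet_Q (k) : MeasurableSet (Q k) :=
    measurableSet_unitCube.preimage (by fun_prop)
  have disjoint_Q : Pairwise (Function.onFun Disjoint Q) := fun k l hkl =>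
    disjoint_left.mpr fun x hk hl =>
      hkl (funext fun i => (mem_Q.mp hk i).symm.trans (mem_Q.mp hl i))
  have iUnion_Q : ⋃ k, Q k = univ :=
    eq_univ_of_forall fun x => mem_iUnion.mpr ⟨fun i => ⌈x i⌉ - 1, mem_Q.mpr fun _ => rfl⟩
  have hsum := hasSum_integral_iUnion measurableSet_Q disjoint_Q hf.integrableOn
  rw [iUnion_Q, setIntegral_univ] at hsum
  refine hsum.congr_fun fun k => ?_
  rw [← (measurePreserving_add_right volume (intVec k)).setIntegral_preimage_emb
    (measurableEmbedding_addRight _) f]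
  simp [Q]

/-- The sum of the translates of `f` by `ℤ^ι`. The sum is taken in `C(ℝ^ι, F)`, hence it is `0`
when it does not converge locally uniformly. -/
def periodization (f : C(EuclideanSpace ℝ ι, F)) : C(EuclideanSpace ℝ ι, F) :=
  ∑' k, f.comp (ContinuousMap.addRight (intVec k))

lemma periodization_add_intVec (f : C(EuclideanSpace ℝ ι, F)) (x : EuclideanSpace ℝ ι)
    (l : ι → ℤ) : periodization f (x + intVec l) = periodization f x := by
  by_cases h : Summable fun k => f.comp (ContinuousMap.addRight (intVec k))
  · simp only [periodization, ← ContinuousMap.tsum_apply h, ContinuousMap.comp_apply,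
      ContinuousMap.coe_addRight]
    rw [← (Equiv.addLeft l).tsum_eq fun k => f (x + intVec k)]
    simp [add_assoc]
  · simp [periodization, tsum_eq_zero_of_not_summable h]

lemma periodization_factorsThrough_torusMk (f : C(EuclideanSpace ℝ ι, F)) :
    Function.FactorsThrough (periodization f) torusMk := fun x y hxy => by
  obtain ⟨k, rfl⟩ := torusMk_eq_iff.mp hxy
  exact (periodization_add_intVec f x k).symm

/-- The function on the torus `(ℝ/ℤ)^ι` induced by the periodization of `f`. -/
def torusPeriodization (f : C(EuclideanSpace ℝ ι, F)) : C(UnitAddTorus ι, F) :=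
  isQuotientMap_torusMk.lift (periodization f) (periodization_factorsThrough_torusMk f)

lemma torusPeriodization_torusMk [CompleteSpace F] {f : C(EuclideanSpace ℝ ι, F)}
    (hf : SummableTranslates f) (x : EuclideanSpace ℝ ι) :
    torusPeriodization f (torusMk x) = ∑' k, f (x + intVec k) :=
  calc torusPeriodization f (torusMk x) = periodization f x :=
        DFunLike.congr_fun (isQuotientMap_torusMk.lift_comp (periodization f)
          (periodization_factorsThrough_torusMk f)) x
    _ = ∑' k, f (x + intVec k) :=
        (ContinuousMap.tsum_apply (ContinuousMap.summable_of_locally_summable_norm hf) x).symm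

lemma mFourier_torusMk (k : ι → ℤ) (x : EuclideanSpace ℝ ι) :
    mFourier k (torusMk x) = Real.fourierChar (inner ℝ x (intVec k)) := by
  have h_inner : inner ℝ x (intVec k) = ∑ i, k i * x i := by simp [PiLp.inner_apply]
  rw [Real.fourierChar_apply, h_inner]
  simp only [mFourier, torusMk, ContinuousMap.coe_mk, fourier_coe_apply, ← Complex.exp_sum]
  push_cast
  simp only [Finset.mul_sum, Finset.sum_mul]
  congr 1
  exact Finset.sum_congr rfl fun i _ => by ring

lemma mFourierCoeff_eq_setIntegral_unitCube [NormedSpace ℂ F] (f : UnitAddTorus ι → F)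
    (k : ι → ℤ) :
    mFourierCoeff f k = ∫ x in unitCube ι, mFourier (-k) (torusMk x) • f (torusMk x) := by
  rw [mFourierCoeff_eq_integral f k 0, ← (PiLp.volume_preserving_toLp ι).setIntegral_preimage_emb
    (MeasurableEquiv.toLp 2 (ι → ℝ)).measurableEmbedding]
  simp [unitCube, torusMk]

lemma mFourierCoeff_torusPeriodization [NormedSpace ℂ F] [CompleteSpace F]
    {f : C(EuclideanSpace ℝ ι, F)} (hf : SummableTranslates f) (m : ι → ℤ) :
    mFourierCoeff (torusPeriodization f) m = 𝓕 (f : EuclideanSpace ℝ ι → F) (intVec m) := by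
  let e : C(EuclideanSpace ℝ ι, ℂ) := (mFourier (-m)).comp torusMk
  have he (x) : e x = Real.fourierChar (-inner ℝ x (intVec m)) := by
    simp [e, mFourier_torusMk]
  have he_add (x k) : e (x + intVec k) = e x := by simp [e]
  have h_int : Integrable fun x => e x • f x :=
    hf.integrable.bdd_smul 1 e.continuous.aestronglyMeasurable (.of_forall fun x => by
      rw [he, Circle.norm_coe])
  have h_swap := hasSum_integral_of_summable_integral_norm (μ := volume.restrict (unitCube ι))
    (F := fun k x => e (x + intVec k) • f (x + intVec k))
    (fun k => (h_int.comp_add_right (intVec k)).integrableOn)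
    (hasSum_setIntegral_unitCube_comp_add_intVec h_int.norm).summable
  calc mFourierCoeff (torusPeriodization f) m
      = ∫ x in unitCube ι, e x • ∑' k, f (x + intVec k) := by
        simp only [mFourierCoeff_eq_setIntegral_unitCube, torusPeriodization_torusMk hf, e,
          ContinuousMap.comp_apply]
    _ = ∫ x in unitCube ι, ∑' k, e (x + intVec k) • f (x + intVec k) := by
        simp only [he_add, tsum_const_smul'']
    _ = ∫ x, e x • f x := h_swap.unique (hasSum_setIntegral_unitCube_comp_add_intVec h_int)
    _ = 𝓕 (f : EuclideanSpace ℝ ι → F) (intVec m) := by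
        simp only [Real.fourier_eq, he, Circle.smul_def]

theorem tsum_comp_add_intVec_eq_tsum_fourier {f : C(EuclideanSpace ℝ ι, ℂ)}
    (hf : SummableTranslates f)
    (h_sum : Summable fun k => 𝓕 (f : EuclideanSpace ℝ ι → ℂ) (intVec k))
    (x : EuclideanSpace ℝ ι) :
    ∑' k, f (x + intVec k) =
      ∑' k, 𝓕 (f : EuclideanSpace ℝ ι → ℂ) (intVec k) * mFourier k (torusMk x) := by
  simp only [← mFourierCoeff_torusPeriodization hf] at h_sum ⊢
  rw [← torusPeriodization_torusMk hf]
  exact (hasSum_mFourier_series_apply_of_summable h_sum (torusMk x)).tsum_eq.symm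

lemma summableTranslates_of_isBigO {f : C(EuclideanSpace ℝ ι, F)} {s : ℝ}
    (hs : s < -Fintype.card ι)
    (hf : f =O[Filter.cocompact (EuclideanSpace ℝ ι)] (‖·‖ ^ s)) : SummableTranslates f := by
  intro K
  let L := Submodule.span ℤ (range (EuclideanSpace.basisFun ι ℝ).toBasis)
  have mem_L (k : ι → ℤ) : intVec k ∈ L := by
    rw [Module.Basis.mem_span_iff_repr_mem]
    simp
  have finrank_L : Module.finrank ℤ L = Fintype.card ι := by
    rw [ZLattice.rank ℝ, finrank_euclideanSpace]
  let toL (k : ι → ℤ) : L := ⟨intVec k, mem_L k⟩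
  have toL_injective : Function.Injective toL := fun k l hkl =>
    intVec_injective (congrArg Subtype.val hkl)
  have h_sum := summable_norm_restrict_comp_addRight_of_isBigO L (by rwa [finrank_L]) hf K
  have h_sum_intVec := h_sum.comp_injective toL_injective
  exact h_sum_intVec

lemma summableTranslates_schwartzMap [NormedSpace ℝ F] (f : 𝓢(EuclideanSpace ℝ ι, F)) :
    SummableTranslates (f : C(EuclideanSpace ℝ ι, F)) :=
  summableTranslates_of_isBigO (sub_one_lt _) (f.isBigO_cocompact_rpow _)

theorem tsum_schwartzMap_add_intVec_eq_tsum_fourier (f : 𝓢(EuclideanSpace ℝ ι, ℂ))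
    (x : EuclideanSpace ℝ ι) :
    ∑' k, f (x + intVec k) = ∑' k, 𝓕 f (intVec k) * mFourier k (torusMk x) := by
  have h_sum := (summableTranslates_schwartzMap (𝓕 f)).summable 0
  simp only [zero_add] at h_sum
  exact tsum_comp_add_intVec_eq_tsum_fourier (summableTranslates_schwartzMap f) h_sum x

end PoissonSummation

section DiracComb

variable {n : ℕ}

/-- The function `x ↦ f (√(2π) x)` on Euclidean space. The dilation turns `Fhat n f` into Mathlib's
inverse Fourier transform, whose kernel is `e^{2πi⟨x,y⟩}`. -/
def sqrtTwoPiDilation (f : 𝓢(Fin n → ℝ, ℂ)) : 𝓢(EuclideanSpace ℝ (Fin n), ℂ) :=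
  SchwartzMap.compCLMOfContinuousLinearEquiv ℝ
    ((EuclideanSpace.equiv (Fin n) ℝ).trans
      (.smulLeft (Units.mk0 √(2 * π) (by positivity)))) f

lemma sqrtTwoPiDilation_toLp (f : 𝓢(Fin n → ℝ, ℂ)) (x : Fin n → ℝ) :
    sqrtTwoPiDilation f (WithLp.toLp 2 x) = f (√(2 * π) • x) := rfl

lemma Fhat_sqrt_two_pi_smul (f : 𝓢(Fin n → ℝ, ℂ)) (y : Fin n → ℝ) :
    Fhat n f (√(2 * π) • y) = 𝓕⁻ (sqrtTwoPiDilation f) (WithLp.toLp 2 y) := by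
  have h_jacobian : |(√(2 * π) ^ n)⁻¹| = (2 * π) ^ (-(n : ℝ) / 2) := by
    rw [abs_of_nonneg (by positivity), Real.sqrt_eq_rpow, ← Real.rpow_mul_natCast (by positivity),
      ← Real.rpow_neg (by positivity)]
    ring_nf
  have h_phase (x : Fin n → ℝ) : ∑ j, (√(2 * π) • x) j * (√(2 * π) • y) j =
      2 * π * inner ℝ (WithLp.toLp 2 x) (WithLp.toLp 2 y) := by
    simp only [Pi.smul_apply, smul_eq_mul, PiLp.inner_apply, RCLike.inner_apply, conj_trivial,
      Finset.mul_sum]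
    refine Finset.sum_congr rfl fun j _ => ?_
    rw [mul_mul_mul_comm, Real.mul_self_sqrt (by positivity), mul_comm (x j)]
  calc Fhat n f (√(2 * π) • y)
      = ∫ x, f (√(2 * π) • x) * Complex.exp
          (Complex.I * ((∑ j, (√(2 * π) • x) j * (√(2 * π) • y) j : ℝ) : ℂ)) := by
        rw [Measure.integral_comp_smul volume (fun x : Fin n → ℝ => f x * Complex.exp
          (Complex.I * ((∑ j, x j * (√(2 * π) • y) j : ℝ) : ℂ))), Module.finrank_fin_fun,
          h_jacobian, Complex.real_smul, Fhat]
    _ = ∫ x, Real.fourierChar (inner ℝ (WithLp.toLp 2 x) (WithLp.toLp 2 y)) •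
          sqrtTwoPiDilation f (WithLp.toLp 2 x) := by
        simp only [h_phase, sqrtTwoPiDilation_toLp, Circle.smul_def, Real.fourierChar_apply,
          smul_eq_mul]
        simp only [mul_comm]
    _ = 𝓕⁻ (sqrtTwoPiDilation f) (WithLp.toLp 2 y) := by
        rw [SchwartzMap.fourierInv_coe, Real.fourierInv_eq,
          ← (PiLp.volume_preserving_toLp (Fin n)).integral_comp
          (MeasurableEquiv.toLp 2 (Fin n → ℝ)).measurableEmbedding]

theorem tsum_Fhat_sqrt_two_pi_smul_ZtoR (f : 𝓢(Fin n → ℝ, ℂ)) :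
    ∑' k, Fhat n f (√(2 * π) • ZtoR k) = ∑' k, f (√(2 * π) • ZtoR k) := by
  let g := sqrtTwoPiDilation f
  calc ∑' k, Fhat n f (√(2 * π) • ZtoR k) = ∑' k, 𝓕 g (intVec (-k)) := by
        simp only [Fhat_sqrt_two_pi_smul, map_neg, SchwartzMap.fourierInv_coe,
          Real.fourierInv_eq_fourier_neg]
        rfl
    _ = ∑' k, 𝓕 g (intVec k) := (Equiv.neg _).tsum_eq fun k => 𝓕 g (intVec k)
    _ = ∑' k, g (intVec k) := by
        simpa [mFourier_torusMk] using (tsum_schwartzMap_add_intVec_eq_tsum_fourier g 0).symm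
    _ = ∑' k, f (√(2 * π) • ZtoR k) := rfl

end DiracComb

section EvenForms

lemma even_sum_sum_of_symm {ι M : Type*} [AddCommMonoid M] {f : ι → ι → M}
    (h_symm : ∀ i j, f i j = f j i) (h_diag : ∀ i, Even (f i i)) (s : Finset ι) :
    Even (∑ i ∈ s, ∑ j ∈ s, f i j) := by
  classical
  induction s using Finset.induction_on with
  | empty => simp
  | insert a s ha ih =>
    have h_split : ∑ i ∈ insert a s, ∑ j ∈ insert a s, f i j =
        f a a + (∑ j ∈ s, f a j + ∑ j ∈ s, f a j) + ∑ i ∈ s, ∑ j ∈ s, f i j := by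
      simp only [Finset.sum_insert ha, Finset.sum_add_distrib, h_symm _ a]
      abel
    rw [h_split]
    exact ((h_diag a).add (Even.add_self _)).add ih

lemma even_vecMul_dotProduct_self {ι R : Type*} [Fintype ι] [CommSemiring R] {B : Matrix ι ι R}
    (hB : B.IsSymm) (h_diag : ∀ i, Even (B i i)) (v : ι → R) :
    Even (B.vecMul v ⬝ᵥ v) := by
  have h := even_sum_sum_of_symm (f := fun j i => v i * B i j * v j)
    (fun i j => by rw [hB.apply]; ring) (fun i => ((h_diag i).mul_left _).mul_right _) .univ
  simpa only [dotProduct, Matrix.vecMul, Finset.sum_mul] using h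

lemma exp_pi_mul_I_mul_of_even {m : ℤ} (hm : Even m) :
    Complex.exp (π * Complex.I * m) = 1 := by
  obtain ⟨r, rfl⟩ := hm
  exact Complex.exp_eq_one_iff.mpr ⟨r, by push_cast; ring⟩

end EvenForms

/-- The Dirac comb `Δ = Σ_{k∈ℤⁿ} δ_{√(2π)k}` is fixed by the Weil-representation
operators attached to the generators of `Γ_{1,2}`: the Fourier transform, chirps
`e^{πi⟨kB,k⟩}` with `B` symmetric integral with even diagonal, and changes of
variable by `A ∈ GL(n,ℤ)`. -/
theorem dirac_comb_fixed_by_gamma12_generators (n : ℕ) (hn : 1 ≤ n)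
    (f : SchwartzMap (Fin n → ℝ) ℂ) :
    (∑' k : Fin n → ℤ, Fhat n f (Real.sqrt (2 * π) • ZtoR k)) =
      (∑' k : Fin n → ℤ, f (Real.sqrt (2 * π) • ZtoR k)) ∧
    (∀ B : Matrix (Fin n) (Fin n) ℤ, Matrix.transpose B = B →
      (∀ i, (2 : ℤ) ∣ B i i) →
      (∑' k : Fin n → ℤ,
          Complex.exp ((Real.pi : ℂ) * Complex.I *
              ((∑ j, Matrix.vecMul k B j * k j : ℤ) : ℂ)) *
            f (Real.sqrt (2 * π) • ZtoR k)) =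
        ∑' k : Fin n → ℤ, f (Real.sqrt (2 * π) • ZtoR k)) ∧
    (∀ A A' : Matrix (Fin n) (Fin n) ℤ, A * A' = 1 → A' * A = 1 →
      (∑' k : Fin n → ℤ, f (Real.sqrt (2 * π) • ZtoR (Matrix.vecMul k A))) =
        ∑' k : Fin n → ℤ, f (Real.sqrt (2 * π) • ZtoR k)) := by
  refine ⟨tsum_Fhat_sqrt_two_pi_smul_ZtoR f, fun B hB h_diag => tsum_congr fun k => ?_,
    fun A A' h_right h_left => ?_⟩
  · have h_even : Even (B.vecMul k ⬝ᵥ k) :=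
      even_vecMul_dotProduct_self hB (fun i => even_iff_two_dvd.mpr (h_diag i)) k
    rw [← dotProduct, exp_pi_mul_I_mul_of_even h_even, one_mul]
  · exact (Matrix.toLinearEquivRight'OfInv h_left h_right).toEquiv.tsum_eq
      fun k => f (√(2 * π) • ZtoR k)
end
end

section
/- Let n ≥ 1, N ≥ 1, and let c : ℚⁿ → ℂ be supported in the lattice N⁻¹ℤⁿ and Nℤⁿ-periodic (c(x + k) = c(x) for all x ∈ ℚⁿ, k ∈ Nℤⁿ). Then for every Schwartz function f on ℝⁿ: (i) for every symmetric integer n×n matrix β, Σ_{ξ∈N⁻¹ℤⁿ} c(ξ) e^{2πiN²⟨ξβ,ξ⟩} f(√(2π)·ξ) = Σ_{ξ∈N⁻¹ℤⁿ} c(ξ) f(√(2π)·ξ); (ii) for every integer n×n matrix α such that A = 1 + 2N²α is invertible over ℤ, Σ_{ξ∈N⁻¹ℤⁿ} c(ξ) f(√(2π)·ξA) = Σ_{ξ∈N⁻¹ℤⁿ} c(ξ) f(√(2π)·ξ). That is, the Weil-representation operators attached to the generators of the subgroup U_{2N²} fix every Poisson distribution supported on √(2π)·N⁻¹ℤⁿ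 with Nℤⁿ-periodic coefficients. -/
noncomputable section

open scoped BigOperators Real

/-- The inclusion `ℚⁿ ⊆ ℝⁿ`. -/
def QtoR {n : ℕ} (x : Fin n → ℚ) : Fin n → ℝ := fun j => (x j : ℝ)

/-- The lattice `N⁻¹ℤⁿ ⊆ ℚⁿ`. -/
def invNLattice (n N : ℕ) : Set (Fin n → ℚ) :=
  {x | ∀ j, ∃ m : ℤ, x j = (m : ℚ) / (N : ℚ)}

/-!
For `ξ ∈ N⁻¹ℤⁿ` the number `N²⟨ξβ,ξ⟩` is an integer, so every chirp is identically `1` on the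
support of the distribution. A matrix `A = 1 + Mα`, `N² ∣ M`, invertible over `ℤ` permutes `N⁻¹ℤⁿ`
and moves each point by `Mξα ∈ Nℤⁿ`, so it preserves the coefficients, and reindexing the sum along
it removes `A`.
-/

section Lattice

open scoped Matrix

variable {n N : ℕ} {x y : Fin n → ℚ}

theorem vecMul_mem_invNLattice {p : ℕ} (M : Matrix (Fin n) (Fin p) ℤ) (hx : x ∈ invNLattice n N) :
    x ᵥ* M.map (Int.cast : ℤ → ℚ) ∈ invNLattice p N := by
  choose m hm using hx
  refine fun j => ⟨(m ᵥ* M) j, ?_⟩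
  simp only [Matrix.vecMul, dotProduct, Matrix.map_apply, hm, div_mul_eq_mul_div,
    Finset.sum_div, Int.cast_sum, Int.cast_mul]

theorem exists_int_eq_sq_mul_dotProduct (hN : N ≠ 0) (hx : x ∈ invNLattice n N)
    (hy : y ∈ invNLattice n N) : ∃ z : ℤ, (N : ℚ) ^ 2 * (x ⬝ᵥ y) = z := by
  choose a ha using hx
  choose b hb using hy
  have hNQ : (N : ℚ) ≠ 0 := Nat.cast_ne_zero.mpr hN
  refine ⟨a ⬝ᵥ b, ?_⟩
  simp only [dotProduct, Finset.mul_sum, Int.cast_sum, Int.cast_mul]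
  refine Finset.sum_congr rfl fun j _ => ?_
  rw [ha, hb]
  field_simp

theorem exp_two_pi_I_mul_sq_mul_dotProduct_eq_one (hN : N ≠ 0) (hx : x ∈ invNLattice n N)
    (hy : y ∈ invNLattice n N) :
    Complex.exp (2 * (π : ℂ) * Complex.I * (((N : ℚ) ^ 2 * (x ⬝ᵥ y) : ℚ) : ℂ)) = 1 := by
  obtain ⟨z, hz⟩ := exists_int_eq_sq_mul_dotProduct hN hx hy
  rw [hz, Rat.cast_intCast, mul_comm, Complex.exp_int_mul_two_pi_mul_I]

theorem exists_vecMul_one_add_smul_eq_add {M : ℤ} (hM : (N : ℤ) ^ 2 ∣ M)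
    (α : Matrix (Fin n) (Fin n) ℤ) (hx : x ∈ invNLattice n N) :
    ∃ k : Fin n → ℤ,
      x ᵥ* (1 + M • α).map (Int.cast : ℤ → ℚ) = x + fun j => (N : ℚ) * (k j : ℚ) := by
  obtain ⟨d, rfl⟩ := hM
  choose k hk using vecMul_mem_invNLattice α hx
  have hmap : (1 + ((N : ℤ) ^ 2 * d) • α).map (Int.cast : ℤ → ℚ) =
      1 + ((N : ℚ) ^ 2 * d) • α.map (Int.cast : ℤ → ℚ) := by
    rw [Matrix.map_add _ Int.cast_add, Matrix.map_one _ Int.cast_zero Int.cast_one,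
      Matrix.map_smul' _ _ _ Int.cast_mul]
    push_cast
    rfl
  refine ⟨d • k, ?_⟩
  rw [hmap, Matrix.vecMul_add, Matrix.vecMul_one, Matrix.vecMul_smul]
  ext j
  simp only [Pi.add_apply, Pi.smul_apply, smul_eq_mul, hk, Int.cast_mul]
  field_simp

theorem bijOn_vecMul_invNLattice (N : ℕ) {A : Matrix (Fin n) (Fin n) ℤ} (hA : IsUnit A) :
    Set.BijOn (fun x : Fin n → ℚ => x ᵥ* A.map (Int.cast : ℤ → ℚ))
      (invNLattice n N) (invNLattice n N) := by
  have cancel {B C : Matrix (Fin n) (Fin n) ℤ} (h : B * C = 1) (x : Fin n → ℚ) :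
      x ᵥ* B.map (Int.cast : ℤ → ℚ) ᵥ* C.map (Int.cast : ℤ → ℚ) = x := by
    rw [Matrix.vecMul_vecMul, ← Matrix.map_mul_intCast, h,
      Matrix.map_one _ Int.cast_zero Int.cast_one, Matrix.vecMul_one]
  obtain ⟨⟨A, B, hAB, hBA⟩, rfl⟩ := hA
  exact Set.InvOn.bijOn (f' := fun x => x ᵥ* B.map (Int.cast : ℤ → ℚ))
    ⟨fun x _ => cancel hAB x, fun x _ => cancel hBA x⟩
    (fun _ => vecMul_mem_invNLattice A) (fun _ => vecMul_mem_invNLattice B)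

/-- The `HasSum` form also records that convergence is preserved; equality of the `∑'` alone would
be `0 = 0` for a divergent sum. -/
theorem U2N2_generators_fix_poisson_general (hN : N ≠ 0) (c : (Fin n → ℚ) → ℂ)
    (hper : ∀ (x : Fin n → ℚ) (k : Fin n → ℤ), c (x + fun j => (N : ℚ) * (k j : ℚ)) = c x)
    (φ : (Fin n → ℚ) → ℂ) (s : ℂ) :
    (∀ β : Matrix (Fin n) (Fin n) ℤ,
      HasSum (fun ξ : invNLattice n N => c ξ * Complex.exp (2 * (π : ℂ) * Complex.I *
          (((N : ℚ) ^ 2 * ((ξ : Fin n → ℚ) ᵥ* β.map (Int.cast : ℤ → ℚ) ⬝ᵥ ξ) : ℚ) : ℂ)) * φ ξ) s ↔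
        HasSum (fun ξ : invNLattice n N => c ξ * φ ξ) s) ∧
    (∀ (M : ℤ) (α : Matrix (Fin n) (Fin n) ℤ), (N : ℤ) ^ 2 ∣ M → IsUnit (1 + M • α) →
      (HasSum (fun ξ : invNLattice n N =>
          c ξ * φ (ξ ᵥ* (1 + M • α).map (Int.cast : ℤ → ℚ))) s ↔
        HasSum (fun ξ : invNLattice n N => c ξ * φ ξ) s)) := by
  refine ⟨fun β => ?_, fun M α hM hA => ?_⟩
  · have chirp_eq_one (ξ : invNLattice n N) :=
      exp_two_pi_I_mul_sq_mul_dotProduct_eq_one hN (vecMul_mem_invNLattice β ξ.2) ξ.2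
    simp only [chirp_eq_one, mul_one]
  · have coeff_invariant (ξ : invNLattice n N) :
        c (ξ ᵥ* (1 + M • α).map (Int.cast : ℤ → ℚ)) = c ξ := by
      obtain ⟨k, hk⟩ := exists_vecMul_one_add_smul_eq_add hM α ξ.2
      rw [hk, hper]
    let e := (bijOn_vecMul_invNLattice N hA).equiv
    have summand_eq : (fun ξ : invNLattice n N =>
        c ξ * φ (ξ ᵥ* (1 + M • α).map (Int.cast : ℤ → ℚ))) =
          (fun ξ : invNLattice n N => c ξ * φ ξ) ∘ e :=
      funext fun ξ => congrArg (· * _) (coeff_invariant ξ).symm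
    rw [summand_eq, e.hasSum_iff]

end Lattice

/-- The Weil-representation operators attached to the generators of `U_{2N²}` fix
every Poisson distribution supported on `√(2π)·N⁻¹ℤⁿ` with `Nℤⁿ`-periodic
coefficients: (i) chirps `e^{2πiN²⟨ξβ,ξ⟩}` with `β` symmetric integral, and
(ii) changes of variable by `A = 1 + 2N²α ∈ GL(n,ℤ)`. -/
theorem U2N2_generators_fix_poisson (n N : ℕ) (hn : 1 ≤ n) (hN : 1 ≤ N)
    (c : (Fin n → ℚ) → ℂ)
    (hsupp : ∀ x, x ∉ invNLattice n N → c x = 0)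
    (hper : ∀ (x : Fin n → ℚ) (k : Fin n → ℤ),
      c (x + fun j => (N : ℚ) * (k j : ℚ)) = c x)
    (f : SchwartzMap (Fin n → ℝ) ℂ) :
    (∀ β : Matrix (Fin n) (Fin n) ℤ, Matrix.transpose β = β →
      (∑' ξ : invNLattice n N,
          c ξ * Complex.exp (2 * (Real.pi : ℂ) * Complex.I *
              (((N : ℚ) ^ 2 * ∑ j,
                Matrix.vecMul (ξ : Fin n → ℚ)
                  (Matrix.map β (fun z : ℤ => (z : ℚ))) j * (ξ : Fin n → ℚ) j : ℚ) : ℂ)) *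
            f (Real.sqrt (2 * π) • QtoR (ξ : Fin n → ℚ))) =
        ∑' ξ : invNLattice n N,
          c ξ * f (Real.sqrt (2 * π) • QtoR (ξ : Fin n → ℚ))) ∧
    (∀ α A' : Matrix (Fin n) (Fin n) ℤ,
      (1 + ((2 * N ^ 2 : ℕ) : ℤ) • α) * A' = 1 →
      A' * (1 + ((2 * N ^ 2 : ℕ) : ℤ) • α) = 1 →
      (∑' ξ : invNLattice n N,
          c ξ * f (Real.sqrt (2 * π) • QtoR
            (Matrix.vecMul (ξ : Fin n → ℚ)
              (Matrix.map (1 + ((2 * N ^ 2 : ℕ) : ℤ) • α) (fun z : ℤ => (z : ℚ)))))) =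
        ∑' ξ : invNLattice n N,
          c ξ * f (Real.sqrt (2 * π) • QtoR (ξ : Fin n → ℚ))) := by
  have general (s : ℂ) := U2N2_generators_fix_poisson_general (Nat.one_le_iff_ne_zero.mp hN) c hper
    (fun x => f (√(2 * π) • QtoR x)) s
  exact ⟨fun β _ => tsum_eq_tsum_of_hasSum_iff_hasSum fun {s} => (general s).1 β,
    fun α A' hAA' _ => tsum_eq_tsum_of_hasSum_iff_hasSum fun {s} =>
      (general s).2 _ α ⟨2, by push_cast; ring⟩ (.of_mul_eq_one A' hAA')⟩
end
end
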